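/- arXiv:gr-qc/9705085 — 5 statements merged into one kernel-verified Lean document; each statement's English description precedes it below -/
import Mathlib

section
/- Let λ : ℝ → ℝ be nonnegative on (0,∞), let f, g : ℝ → ℝ, let x₀ ∈ ℝ and let C ∈ (0,1]. Assume that for every k ∈ (0,1] there exists ε₀ > 0 such that for all ε with 0 < ε < ε₀ and all δ with |δ| ≤ ε one has |(f(x₀+δ) − f(x₀)) − (g(x₀+δ) − g(x₀))| ≤ k·λ(ε). Suppose (εₙ) is a sequence of positive reals tending to 0 such that λ(εₙ)/εₙ converges to a finite limit K, and (δₙ) is a sequence with C·εₙ ≤ |δₙ| ≤ εₙ for all n. Then the difference of first difference quotients ((f(x₀+δₙ) − f(x₀))/δₙ) − ((g(x₀+δₙ) − g(x₀))/δₙ) tends to 0 as n → ∞. In particular, if g is differentiable at x₀, then (f(x₀+δₙ) − f(x₀))/δₙ → g'(x₀). -/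
open Filter Topology

/-- Analytic core of Lemma 1: if measurements may be refined by any factor `k ∈ (0,1]`
and `λ(εₙ)/εₙ → K < ∞` along some sequence `εₙ → 0⁺`, then the first difference
quotients of `f` and `g` at `x₀` agree in the limit; in particular if `g` is
differentiable at `x₀`, the difference quotients of `f` converge to `g' x₀`. -/
theorem stmt0 (lam : ℝ → ℝ) (hlam : ∀ ε > 0, 0 ≤ lam ε)
    (f g : ℝ → ℝ) (x₀ : ℝ) (C : ℝ) (hC : 0 < C ∧ C ≤ 1)
    (hclose : ∀ k : ℝ, 0 < k → k ≤ 1 → ∃ ε₀ > 0, ∀ ε : ℝ, 0 < ε → ε < ε₀ →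
      ∀ δ : ℝ, |δ| ≤ ε →
        |(f (x₀ + δ) - f x₀) - (g (x₀ + δ) - g x₀)| ≤ k * lam ε)
    (ε : ℕ → ℝ) (hεpos : ∀ n, 0 < ε n) (hε0 : Tendsto ε atTop (𝓝 0))
    (K : ℝ) (hK : Tendsto (fun n => lam (ε n) / ε n) atTop (𝓝 K))
    (δ : ℕ → ℝ) (hδ : ∀ n, C * ε n ≤ |δ n| ∧ |δ n| ≤ ε n) :
    Tendsto (fun n =>
        (f (x₀ + δ n) - f x₀) / δ n - (g (x₀ + δ n) - g x₀) / δ n)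
      atTop (𝓝 0) ∧
    (DifferentiableAt ℝ g x₀ →
      Tendsto (fun n => (f (x₀ + δ n) - f x₀) / δ n) atTop (𝓝 (deriv g x₀))) := by
  obtain ⟨hC0, hC1⟩ := hC
  have hδpos : ∀ n, 0 < |δ n| := fun n => lt_of_lt_of_le (mul_pos hC0 (hεpos n)) (hδ n).1
  have hδne : ∀ n, δ n ≠ 0 := fun n => abs_pos.mp (hδpos n)
  have main : Tendsto (fun n =>
        (f (x₀ + δ n) - f x₀) / δ n - (g (x₀ + δ n) - g x₀) / δ n)
      atTop (𝓝 0) := by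
    rw [Metric.tendsto_nhds]
    intro η hη
    have hM : 0 < |K| + 1 := by positivity
    have hKM : K < |K| + 1 := by linarith [le_abs_self K]
    obtain ⟨e, he, hcl⟩ := hclose (min 1 (η * C / (2 * (|K| + 1))))
      (lt_min one_pos (by positivity)) (min_le_left _ _)
    filter_upwards [hK.eventually_lt_const hKM, hε0.eventually_lt_const he] with n h1 h2
    have h3 := hcl (ε n) (hεpos n) h2 (δ n) (hδ n).2
    have h4 : lam (ε n) < (|K| + 1) * ε n := (div_lt_iff₀ (hεpos n)).mp h1
    have h5 : min 1 (η * C / (2 * (|K| + 1))) * lam (ε n)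
        ≤ η * C / (2 * (|K| + 1)) * ((|K| + 1) * ε n) :=
      mul_le_mul (min_le_right _ _) h4.le (hlam _ (hεpos n)) (by positivity)
    have h6 : η * C / (2 * (|K| + 1)) * ((|K| + 1) * ε n) = η / 2 * (C * ε n) := by
      field_simp
    have h7 : η / 2 * (C * ε n) ≤ η / 2 * |δ n| :=
      mul_le_mul_of_nonneg_left (hδ n).1 (by positivity)
    have h8 : η / 2 * |δ n| < η * |δ n| :=
      mul_lt_mul_of_pos_right (by linarith) (hδpos n)
    rw [Real.dist_eq, sub_zero, ← sub_div, abs_div, div_lt_iff₀ (hδpos n)]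
    linarith
  refine ⟨main, fun hg => ?_⟩
  have hδ0 : Tendsto δ atTop (𝓝 0) :=
    squeeze_zero_norm (fun n => (hδ n).2) hε0
  have hδ0' : Tendsto δ atTop (𝓝[≠] 0) :=
    tendsto_nhdsWithin_iff.mpr ⟨hδ0, Eventually.of_forall hδne⟩
  have hs := (hasDerivAt_iff_tendsto_slope_zero.mp hg.hasDerivAt).comp hδ0'
  have := main.add hs
  rw [zero_add] at this
  refine this.congr fun n => ?_
  simp only [Function.comp, smul_eq_mul]
  ring
end

section
/- Let λ : ℝ → ℝ be nonnegative on (0,∞), let f, g : ℝ → ℝ, let x₀ ∈ ℝ and let C ∈ (0,1/2]. Assume that for every k ∈ (0,1] there exists ε₀ > 0 such that for all ε with 0 < ε < ε₀ and all δ with |δ| ≤ ε one has |(f(x₀+δ) − f(x₀)) − (g(x₀+δ) − g(x₀))| ≤ k·λ(ε). Suppose (εₙ) is a sequence of positive reals tending to 0 such that λ(εₙ)/εₙ² converges to a finite limit K, and (δₙ) is a sequence with C·εₙ ≤ |δₙ| ≤ εₙ/2 for all n. Then the difference of second forward difference quotients ((f(x₀+2δₙ) − 2f(x₀+δₙ)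 + f(x₀))/δₙ²) − ((g(x₀+2δₙ) − 2g(x₀+δₙ) + g(x₀))/δₙ²) tends to 0 as n → ∞. -/
open Filter Topology

/-- Analytic core of Lemma 3: under refinable measurement errors with
`λ(εₙ)/εₙ² → K < ∞` along a sequence `εₙ → 0⁺`, the second forward difference
quotients of `f` and `g` at `x₀` agree in the limit. -/
theorem stmt1 (lam : ℝ → ℝ) (hlam : ∀ ε > 0, 0 ≤ lam ε)
    (f g : ℝ → ℝ) (x₀ : ℝ) (C : ℝ) (hC : 0 < C ∧ C ≤ 1 / 2)
    (hclose : ∀ k : ℝ, 0 < k → k ≤ 1 → ∃ ε₀ > 0, ∀ ε : ℝ, 0 < ε → ε < ε₀ →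
      ∀ δ : ℝ, |δ| ≤ ε →
        |(f (x₀ + δ) - f x₀) - (g (x₀ + δ) - g x₀)| ≤ k * lam ε)
    (ε : ℕ → ℝ) (hεpos : ∀ n, 0 < ε n) (hε0 : Tendsto ε atTop (𝓝 0))
    (K : ℝ) (hK : Tendsto (fun n => lam (ε n) / (ε n) ^ 2) atTop (𝓝 K))
    (δ : ℕ → ℝ) (hδ : ∀ n, C * ε n ≤ |δ n| ∧ |δ n| ≤ ε n / 2) :
    Tendsto (fun n =>
        (f (x₀ + 2 * δ n) - 2 * f (x₀ + δ n) + f x₀) / (δ n) ^ 2 -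
        (g (x₀ + 2 * δ n) - 2 * g (x₀ + δ n) + g x₀) / (δ n) ^ 2)
      atTop (𝓝 0) := by
  obtain ⟨hC0, -⟩ := hC
  rw [Metric.tendsto_nhds]
  intro r hr
  have hM : 0 < |K| + 1 := by positivity
  set k := min 1 (r * C ^ 2 / (6 * (|K| + 1))) with hk
  have hk0 : 0 < k := lt_min one_pos (by positivity)
  have hk2 : k * (6 * (|K| + 1)) ≤ r * C ^ 2 := by
    rw [← le_div_iff₀ (by positivity)]
    exact min_le_right _ _
  obtain ⟨ε₀, hε₀, H⟩ := hclose k hk0 (min_le_left _ _)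
  have h1 : ∀ᶠ n in atTop, ε n < ε₀ := hε0.eventually_lt_const hε₀
  have h2 : ∀ᶠ n in atTop, lam (ε n) / (ε n) ^ 2 < |K| + 1 :=
    hK.eventually_lt_const (by linarith [le_abs_self K])
  filter_upwards [h1, h2] with n h1 h2
  have he := hεpos n
  obtain ⟨hd1, hd2⟩ := hδ n
  rw [div_lt_iff₀ (by positivity)] at h2
  have a1 := H (ε n) he h1 (δ n) (by linarith)
  have a2 := H (ε n) he h1 (2 * δ n) (by rw [abs_mul, abs_two]; linarith)
  have hdpos : 0 < |δ n| := lt_of_lt_of_le (by positivity) hd1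
  have hsq : C ^ 2 * ε n ^ 2 ≤ δ n ^ 2 := by
    rw [← sq_abs (δ n), ← mul_pow]
    exact pow_le_pow_left₀ (by positivity) hd1 2
  have hd2pos : 0 < δ n ^ 2 := lt_of_lt_of_le (by positivity) hsq
  rw [Real.dist_eq, sub_zero, ← sub_div, abs_div, abs_of_pos hd2pos, div_lt_iff₀ hd2pos]
  have b1 : k * lam (ε n) ≤ k * ((|K| + 1) * ε n ^ 2) :=
    mul_le_mul_of_nonneg_left h2.le hk0.le
  have b2 : k * (6 * (|K| + 1)) * ε n ^ 2 ≤ r * C ^ 2 * ε n ^ 2 :=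
    mul_le_mul_of_nonneg_right hk2 (by positivity)
  have b3 : r * (C ^ 2 * ε n ^ 2) ≤ r * δ n ^ 2 := mul_le_mul_of_nonneg_left hsq hr.le
  have b4 : 0 < r * δ n ^ 2 := by positivity
  rw [abs_le] at a1 a2
  rw [abs_lt]
  constructor <;> linarith [a1.1, a1.2, a2.1, a2.2]
end

section
/- Let p ≥ 1 be a natural number, let λ : ℝ → ℝ be nonnegative on (0,∞), let f, g : ℝ → ℝ, let x₀ ∈ ℝ and let C ∈ (0, 1/p]. Assume that for every k ∈ (0,1] there exists ε₀ > 0 such that for all ε with 0 < ε < ε₀ and all δ with |δ| ≤ ε one has |(f(x₀+δ) − f(x₀)) − (g(x₀+δ) − g(x₀))| ≤ k·λ(ε). Suppose (εₙ) is a sequence of positive reals tending to 0 such that λ(εₙ)/εₙ^p converges to a finite limit K, and (δₙ) is a sequence with C·εₙ ≤ |δₙ| ≤ εₙ/p for all n. Denote by Δ^p_δ h(x₀) = Σ_{j=0}^{p} (−1)^{p−j} (p choose j) h(x₀ + j·δ) the p-th forward difference of a function h. Then (Δ^p_{δₙ} f(x₀) − Δ^p_{δₙ} g(x₀))/δₙ^p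 tends to 0 as n → ∞. -/
open Filter Topology

/-- Common generalization of Lemmas 1, 3 and 5: under refinable measurement errors
with `λ(εₙ)/εₙ^p → K < ∞` along a sequence `εₙ → 0⁺`, the `p`-th forward difference
quotients of `f` and `g` at `x₀` agree in the limit. Here
`Δ^p_δ h(x₀) = ∑_{j=0}^{p} (−1)^{p−j} (p choose j) h(x₀ + jδ)`. -/
theorem stmt2 (p : ℕ) (hp : 1 ≤ p) (lam : ℝ → ℝ) (hlam : ∀ ε > 0, 0 ≤ lam ε)
    (f g : ℝ → ℝ) (x₀ : ℝ) (C : ℝ) (hC : 0 < C ∧ C ≤ 1 / p)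
    (hclose : ∀ k : ℝ, 0 < k → k ≤ 1 → ∃ ε₀ > 0, ∀ ε : ℝ, 0 < ε → ε < ε₀ →
      ∀ δ : ℝ, |δ| ≤ ε →
        |(f (x₀ + δ) - f x₀) - (g (x₀ + δ) - g x₀)| ≤ k * lam ε)
    (ε : ℕ → ℝ) (hεpos : ∀ n, 0 < ε n) (hε0 : Tendsto ε atTop (𝓝 0))
    (K : ℝ) (hK : Tendsto (fun n => lam (ε n) / (ε n) ^ p) atTop (𝓝 K))
    (δ : ℕ → ℝ) (hδ : ∀ n, C * ε n ≤ |δ n| ∧ |δ n| ≤ ε n / p) :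
    Tendsto (fun n =>
        ((∑ j ∈ Finset.range (p + 1),
            (-1 : ℝ) ^ (p - j) * (p.choose j : ℝ) * f (x₀ + (j : ℝ) * δ n)) -
         (∑ j ∈ Finset.range (p + 1),
            (-1 : ℝ) ^ (p - j) * (p.choose j : ℝ) * g (x₀ + (j : ℝ) * δ n))) / (δ n) ^ p)
      atTop (𝓝 0) := by
  have hp0 : (0 : ℝ) < p := by exact_mod_cast hp
  have hC0 := hC.1
  have halt : ∑ j ∈ Finset.range (p + 1), (-1 : ℝ) ^ (p - j) * (p.choose j : ℝ) = 0 := by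
    have h := add_pow (1 : ℝ) (-1) p
    rw [add_neg_cancel, zero_pow (by omega)] at h
    simpa using h.symm
  have habs : ∑ j ∈ Finset.range (p + 1), (p.choose j : ℝ) = 2 ^ p := by
    exact_mod_cast Nat.sum_range_choose p
  rw [Metric.tendsto_atTop']
  intro η hη
  set M : ℝ := 2 ^ p / C ^ p * (|K| + 1) with hM
  have hMpos : 0 < M := by positivity
  obtain ⟨ε₀, hε₀, hcl⟩ := hclose (min 1 (η / (2 * M))) (by positivity) (min_le_left _ _)
  have hk2 : min 1 (η / (2 * M)) ≤ η / (2 * M) := min_le_right _ _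
  have hk0 : 0 < min 1 (η / (2 * M)) := by positivity
  generalize min 1 (η / (2 * M)) = k at hcl hk2 hk0
  have e1 : ∀ᶠ n in atTop, ε n < ε₀ := hε0.eventually_lt_const hε₀
  have e2 : ∀ᶠ n in atTop, lam (ε n) / (ε n) ^ p < |K| + 1 :=
    hK.eventually_lt_const (by linarith [le_abs_self K])
  obtain ⟨N, hN⟩ := eventually_atTop.1 (e1.and e2)
  refine ⟨N, fun n hn => ?_⟩
  obtain ⟨h1, h2⟩ := hN n hn.le
  have hεn := hεpos n
  obtain ⟨hd1, hd2⟩ := hδ n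
  have hnum : |(∑ j ∈ Finset.range (p + 1),
            (-1 : ℝ) ^ (p - j) * (p.choose j : ℝ) * f (x₀ + (j : ℝ) * δ n)) -
         (∑ j ∈ Finset.range (p + 1),
            (-1 : ℝ) ^ (p - j) * (p.choose j : ℝ) * g (x₀ + (j : ℝ) * δ n))|
      ≤ 2 ^ p * (k * lam (ε n)) := by
    have heq : (∑ j ∈ Finset.range (p + 1),
            (-1 : ℝ) ^ (p - j) * (p.choose j : ℝ) * f (x₀ + (j : ℝ) * δ n)) -
         (∑ j ∈ Finset.range (p + 1),
            (-1 : ℝ) ^ (p - j) * (p.choose j : ℝ) * g (x₀ + (j : ℝ) * δ n))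
        = ∑ j ∈ Finset.range (p + 1), (-1 : ℝ) ^ (p - j) * (p.choose j : ℝ) *
          ((f (x₀ + (j : ℝ) * δ n) - f x₀) - (g (x₀ + (j : ℝ) * δ n) - g x₀)) := by
      rw [← sub_zero (_ - _), ← zero_mul (f x₀ - g x₀), ← halt, Finset.sum_mul,
        ← Finset.sum_sub_distrib, ← Finset.sum_sub_distrib]
      exact Finset.sum_congr rfl fun j _ => by ring
    rw [heq, ← habs, Finset.sum_mul]
    refine (Finset.abs_sum_le_sum_abs _ _).trans (Finset.sum_le_sum fun j hj => ?_)
    have hjp : (j : ℝ) ≤ p := by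
      exact_mod_cast Nat.lt_succ_iff.1 (Finset.mem_range.1 hj)
    have hjd : |(j : ℝ) * δ n| ≤ ε n := by
      rw [abs_mul, Nat.abs_cast]
      calc (j : ℝ) * |δ n| ≤ p * (ε n / p) := by gcongr
        _ = ε n := by field_simp
    rw [abs_mul, abs_mul, abs_pow, abs_neg, abs_one, one_pow, one_mul, Nat.abs_cast]
    exact mul_le_mul_of_nonneg_left (hcl _ hεn h1 _ hjd) (by positivity)
  have hl := hlam _ hεn
  rw [dist_zero_right, Real.norm_eq_abs, abs_div, abs_pow]
  calc _ ≤ 2 ^ p * (k * lam (ε n)) / (C * ε n) ^ p := by gcongr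
    _ = 2 ^ p / C ^ p * k * (lam (ε n) / ε n ^ p) := by
      rw [mul_pow]; field_simp
    _ ≤ 2 ^ p / C ^ p * k * (|K| + 1) := by gcongr
    _ = M * k := by rw [hM]; ring
    _ ≤ M * (η / (2 * M)) := by gcongr
    _ = η / 2 := by field_simp
    _ < η := by linarith
end

section
/- Let p ≥ 1 be a natural number and let λ : ℝ → ℝ satisfy liminf_{ε→0⁺} λ(ε)/ε^p = +∞ (liminf taken along ε → 0 within (0,∞)). Let x₀ ∈ ℝ, r > 0, M ≥ 0, and let f, g : ℝ → ℝ be p times differentiable on [x₀ − r, x₀ + r] with the p-th derivatives bounded in absolute value by M there. Assume that the j-th derivatives of f and g agree at x₀ for all 0 ≤ j ≤ p − 1 (the 0-th derivative being the function value). Then for every k ∈ (0,1] there exists ε₀ > 0 such that for all ε with 0 < ε < ε₀ and all δ with |δ| ≤ ε one has |f(x₀+δ) − g(x₀+δ)| ≤ k·λ(ε). -/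
open Filter Topology

/-- Common generalization of Lemmas 2, 4 and 6: if `liminf_{ε→0⁺} λ(ε)/ε^p = +∞`,
then functions `f, g` that are `p` times differentiable on `[x₀ − r, x₀ + r]`
(with iterated derivatives recorded in `F` and `G`, `F 0 = f`, `G 0 = g`),
whose `p`-th derivatives are bounded by `M` there and whose `j`-th derivatives agree
at `x₀` for all `j ≤ p − 1`, are indistinguishable on `ε`-balls up to error `k·λ(ε)`
for every refinement factor `k ∈ (0,1]`. -/
theorem stmt6 (p : ℕ) (hp : 1 ≤ p) (lam : ℝ → ℝ)
    (hlim : Filter.liminf (fun ε : ℝ => ((lam ε / ε ^ p : ℝ) : EReal)) (𝓝[>] (0 : ℝ)) = ⊤)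
    (x₀ r M : ℝ) (hr : 0 < r) (hM : 0 ≤ M)
    (f g : ℝ → ℝ) (F G : ℕ → ℝ → ℝ) (hF0 : F 0 = f) (hG0 : G 0 = g)
    (hFd : ∀ j < p, ∀ x ∈ Set.Icc (x₀ - r) (x₀ + r),
      HasDerivWithinAt (F j) (F (j + 1) x) (Set.Icc (x₀ - r) (x₀ + r)) x)
    (hGd : ∀ j < p, ∀ x ∈ Set.Icc (x₀ - r) (x₀ + r),
      HasDerivWithinAt (G j) (G (j + 1) x) (Set.Icc (x₀ - r) (x₀ + r)) x)
    (hFM : ∀ x ∈ Set.Icc (x₀ - r) (x₀ + r), |F p x| ≤ M)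
    (hGM : ∀ x ∈ Set.Icc (x₀ - r) (x₀ + r), |G p x| ≤ M)
    (hagree : ∀ j ≤ p - 1, F j x₀ = G j x₀) :
    ∀ k : ℝ, 0 < k → k ≤ 1 → ∃ ε₀ > 0, ∀ ε : ℝ, 0 < ε → ε < ε₀ →
      ∀ δ : ℝ, |δ| ≤ ε → |f (x₀ + δ) - g (x₀ + δ)| ≤ k * lam ε := by
  intro k hk _
  subst hF0 hG0
  have hev : ∀ᶠ ε in 𝓝[>] (0 : ℝ), ((2 * M / k : ℝ) : EReal) < ((lam ε / ε ^ p : ℝ) : EReal) := by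
    refine eventually_lt_of_lt_liminf ?_
    rw [hlim]
    exact EReal.coe_lt_top _
  obtain ⟨e, he, hsub⟩ := mem_nhdsGT_iff_exists_Ioo_subset.1 hev
  refine ⟨min e r, lt_min he hr, ?_⟩
  intro ε hε hlt δ hδ
  have hεr : ε ≤ r := (hlt.trans_le (min_le_right _ _)).le
  have h1 : 2 * M / k < lam ε / ε ^ p := by
    have : ε ∈ Set.Ioo 0 e := ⟨hε, hlt.trans_le (min_le_left _ _)⟩
    exact EReal.coe_lt_coe_iff.1 (hsub this)
  have hsubset : Set.Icc (x₀ - ε) (x₀ + ε) ⊆ Set.Icc (x₀ - r) (x₀ + r) :=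
    Set.Icc_subset_Icc (by linarith) (by linarith)
  have hx₀ : x₀ ∈ Set.Icc (x₀ - ε) (x₀ + ε) := ⟨by linarith, by linarith⟩
  have key : ∀ i ≤ p, ∀ x ∈ Set.Icc (x₀ - ε) (x₀ + ε),
      |F (p - i) x - G (p - i) x| ≤ 2 * M * ε ^ i := by
    intro i
    induction i with
    | zero =>
      intro _ x hx
      have h2 := abs_le.1 (hFM x (hsubset hx))
      have h3 := abs_le.1 (hGM x (hsubset hx))
      simp only [Nat.sub_zero, pow_zero, mul_one]
      exact abs_le.2 ⟨by linarith, by linarith⟩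
    | succ i ih =>
      intro hi x hx
      have hsucc : p - i = p - (i + 1) + 1 := by omega
      have ih' := ih (by omega)
      rw [hsucc] at ih'
      have hd : ∀ y ∈ Set.Icc (x₀ - ε) (x₀ + ε),
          HasDerivWithinAt (fun y => F (p - (i + 1)) y - G (p - (i + 1)) y)
            (F (p - (i + 1) + 1) y - G (p - (i + 1) + 1) y) (Set.Icc (x₀ - ε) (x₀ + ε)) y :=
        fun y hy => ((hFd _ (by omega) y (hsubset hy)).mono hsubset).sub
          ((hGd _ (by omega) y (hsubset hy)).mono hsubset)
      have h4 := (convex_Icc (x₀ - ε) (x₀ + ε)).norm_image_sub_le_of_norm_hasDerivWithin_le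
        hd ih' hx₀ hx
      have h5 : F (p - (i + 1)) x₀ - G (p - (i + 1)) x₀ = 0 :=
        sub_eq_zero.2 (hagree _ (by omega))
      have h6 : |x - x₀| ≤ ε := abs_le.2 ⟨by linarith [hx.1], by linarith [hx.2]⟩
      simp only [h5, sub_zero, Real.norm_eq_abs] at h4
      calc _ ≤ 2 * M * ε ^ i * |x - x₀| := h4
        _ ≤ 2 * M * ε ^ i * ε := by gcongr
        _ = _ := by ring
  have hδ' := abs_le.1 hδ
  have h7 := key p le_rfl (x₀ + δ) ⟨by linarith, by linarith⟩
  rw [Nat.sub_self] at h7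
  have hpow : 0 < ε ^ p := pow_pos hε p
  rw [div_lt_div_iff₀ hk hpow] at h1
  linarith
end

section
/- Let λ : ℝ → ℝ be nonnegative on (0,∞), let f, g : ℝ → ℝ, let x₀ ∈ ℝ and let C ∈ (0, 1/3]. Assume that for every k ∈ (0,1] there exists ε₀ > 0 such that for all ε with 0 < ε < ε₀ and all δ with |δ| ≤ ε one has |(f(x₀+δ) − f(x₀)) − (g(x₀+δ) − g(x₀))| ≤ k·λ(ε). Suppose (εₙ) is a sequence of positive reals tending to 0 such that λ(εₙ)/εₙ³ converges to a finite limit K, and (δₙ) is a sequence with C·εₙ ≤ |δₙ| ≤ εₙ/3 for all n. Then the difference of third forward difference quotients ((f(x₀+3δₙ) − 3f(x₀+2δₙ) + 3f(x₀+δₙ) − f(x₀))/δₙ³) − ((g(x₀+3δₙ) − 3g(x₀+2δₙ) + 3g(x₀+δₙ) − g(x₀))/δₙ³) tends to 0 as n → ∞. -/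
open Filter Topology

/-- Analytic core of Lemma 5 (Fock's reasoning): under refinable measurement errors
with `λ(εₙ)/εₙ³ → K < ∞` along a sequence `εₙ → 0⁺`, the third forward difference
quotients of `f` and `g` at `x₀` agree in the limit. -/
theorem stmt11 (lam : ℝ → ℝ) (hlam : ∀ ε > 0, 0 ≤ lam ε)
    (f g : ℝ → ℝ) (x₀ : ℝ) (C : ℝ) (hC : 0 < C ∧ C ≤ 1 / 3)
    (hclose : ∀ k : ℝ, 0 < k → k ≤ 1 → ∃ ε₀ > 0, ∀ ε : ℝ, 0 < ε → ε < ε₀ →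
      ∀ δ : ℝ, |δ| ≤ ε →
        |(f (x₀ + δ) - f x₀) - (g (x₀ + δ) - g x₀)| ≤ k * lam ε)
    (ε : ℕ → ℝ) (hεpos : ∀ n, 0 < ε n) (hε0 : Tendsto ε atTop (𝓝 0))
    (K : ℝ) (hK : Tendsto (fun n => lam (ε n) / (ε n) ^ 3) atTop (𝓝 K))
    (δ : ℕ → ℝ) (hδ : ∀ n, C * ε n ≤ |δ n| ∧ |δ n| ≤ ε n / 3) :
    Tendsto (fun n =>
        (f (x₀ + 3 * δ n) - 3 * f (x₀ + 2 * δ n) + 3 * f (x₀ + δ n) - f x₀) / (δ n) ^ 3 -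
        (g (x₀ + 3 * δ n) - 3 * g (x₀ + 2 * δ n) + 3 * g (x₀ + δ n) - g x₀) / (δ n) ^ 3)
      atTop (𝓝 0) := by
  obtain ⟨hC0, _⟩ := hC
  rw [Metric.tendsto_nhds]
  intro r hr
  have hM : 0 < |K| + 1 := by positivity
  set k : ℝ := min 1 (r * C ^ 3 / (8 * (|K| + 1))) with hk
  have hk0 : 0 < k := lt_min one_pos (by positivity)
  have hk1 : k ≤ 1 := min_le_left _ _
  have hk2 : k * (8 * (|K| + 1)) ≤ r * C ^ 3 :=
    (le_div_iff₀ (by positivity)).1 (min_le_right _ _)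
  obtain ⟨ε₀, hε₀, H⟩ := hclose k hk0 hk1
  have hKlt : K < |K| + 1 := by linarith [le_abs_self K]
  filter_upwards [hε0.eventually (gt_mem_nhds hε₀), hK.eventually (gt_mem_nhds hKlt)]
    with n hn1 hn2
  have he := hεpos n
  obtain ⟨hd1, hd2⟩ := hδ n
  have he3 : 0 < ε n ^ 3 := by positivity
  have hL : lam (ε n) < (|K| + 1) * ε n ^ 3 := (div_lt_iff₀ he3).1 hn2
  have h1 := abs_le.1 (H (ε n) he hn1 (δ n) (by linarith))
  have h2 := abs_le.1 (H (ε n) he hn1 (2 * δ n) (by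
    rw [abs_mul, abs_of_pos (by norm_num : (0 : ℝ) < 2)]; linarith))
  have h3 := abs_le.1 (H (ε n) he hn1 (3 * δ n) (by
    rw [abs_mul, abs_of_pos (by norm_num : (0 : ℝ) < 3)]; linarith))
  have hdpos : 0 < |δ n| := lt_of_lt_of_le (by positivity) hd1
  have hd3 : C ^ 3 * ε n ^ 3 ≤ |δ n| ^ 3 := by
    rw [← mul_pow]
    exact pow_le_pow_left₀ (by positivity) hd1 3
  have hkL : k * lam (ε n) < k * ((|K| + 1) * ε n ^ 3) := mul_lt_mul_of_pos_left hL hk0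
  have hp : 0 < k * ((|K| + 1) * ε n ^ 3) := by positivity
  have h4 : k * (8 * (|K| + 1)) * ε n ^ 3 ≤ r * C ^ 3 * ε n ^ 3 :=
    mul_le_mul_of_nonneg_right hk2 he3.le
  have h5 : r * (C ^ 3 * ε n ^ 3) ≤ r * |δ n| ^ 3 := mul_le_mul_of_nonneg_left hd3 hr.le
  have h6 : 7 * (k * lam (ε n)) < r * |δ n| ^ 3 := by linarith
  rw [Real.dist_eq, sub_zero, ← sub_div, abs_div, abs_pow, div_lt_iff₀ (by positivity)]
  refine lt_of_le_of_lt (abs_le.2 ⟨?_, ?_⟩) h6 <;>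
    linarith [h1.1, h1.2, h2.1, h2.2, h3.1, h3.2]
end
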